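/- For all real numbers 1≤δ₁<δ₂: I_{δ₁}(μ) ≥ I_{δ₂}(μ) for every μ∈𝒫(V), and moreover there exists μ₀∈𝒫(V) (depending on δ₁ and δ₂) such that I_{δ₁}(μ₀) > I_{δ₂}(μ₀). -/

import Mathlib

open scoped BigOperators Classical ENNReal
open Filter Topology

noncomputable section
namespace ORRW

/-- Probability measures on a finite type `A`, topologized as a subset of `ℝ^A`. -/
abbrev ProbMeas (A : Type) [Fintype A] : Type :=
  {p : A → ℝ // (∀ a, 0 ≤ p a) ∧ ∑ a, p a = 1}

/-- Relative entropy `R(γ‖ρ)` between two finitely supported "rows", valued in `EReal`,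
with `+∞` when absolute continuity fails. -/
def relEnt {A : Type} [Fintype A] (γ ρ : A → ℝ) : EReal :=
  if ∀ a, ρ a = 0 → γ a = 0 then ((∑ a, γ a * Real.log (γ a / ρ a) : ℝ) : EReal)
  else (⊤ : EReal)

/-- `∫ R(q‖p) dν = Σ_a ν(a) · R(q(a,·)‖p(a,·))`. -/
def relEntInt {A : Type} [Fintype A] (ν : A → ℝ) (q p : A → A → ℝ) : EReal :=
  ∑ a, (ν a : EReal) * relEnt (q a) (p a)

/-- `ν` is an invariant measure of the kernel `q`. -/
def Invariant {A : Type} [Fintype A] (ν : A → ℝ) (q : A → A → ℝ) : Prop :=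
  ∀ y, ∑ x, ν x * q x y = ν y

/-- Extended-real logarithm: `⊥` at nonpositive arguments. -/
def elog (x : ℝ) : EReal := if x ≤ 0 then (⊥ : EReal) else ((Real.log x : ℝ) : EReal)

/-- Empirical measure of a finite trajectory `f : Fin (n+1) → A`. -/
def empMeas {A : Type} [Fintype A] [DecidableEq A] (n : ℕ) (f : Fin (n + 1) → A) :
    ProbMeas A :=
  ⟨fun a => ((Finset.univ.filter (fun i => f i = a)).card : ℝ) / (n + 1),
    fun a => by positivity, by
      have key : ∑ a : A, ((Finset.univ.filter (fun i => f i = a)).card) = n + 1 := by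
        have h := Finset.card_eq_sum_card_fiberwise
          (s := (Finset.univ : Finset (Fin (n + 1)))) (t := (Finset.univ : Finset A))
          (f := f) (fun i _ => Finset.mem_univ (f i))
        simpa using h.symm
      have key' : ∑ a : A, (((Finset.univ.filter (fun i => f i = a)).card : ℝ)) = (n : ℝ) + 1 := by
        have h2 := congrArg (fun m : ℕ => (m : ℝ)) key
        push_cast at h2
        simpa using h2
      rw [← Finset.sum_div, key', div_self (by positivity)]⟩

section Graph

variable {V : Type} [Fintype V] [DecidableEq V]

/-- Weight of an edge given the set `F` of already traversed edges. -/
def gw (δ : ℝ) (F : Finset (Sym2 V)) (e : Sym2 V) : ℝ := if e ∈ F then δ else 1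

/-- The transition kernel `p̂_F` on `V`. -/
def phat (G : SimpleGraph V) [DecidableRel G.Adj] (δ : ℝ) (F : Finset (Sym2 V))
    (x y : V) : ℝ :=
  if G.Adj x y then gw δ F s(x, y) / ∑ z ∈ G.neighborFinset x, gw δ F s(x, z) else 0

/-- Two edges are adjacent iff they share a vertex. -/
def edgeAdj (e e' : Sym2 V) : Prop := ∃ v, v ∈ e ∧ v ∈ e'

/-- `x` is a vertex of the edge set `F`. -/
def memVerts (F : Finset (Sym2 V)) (x : V) : Prop := ∃ e ∈ F, x ∈ e

/-- `𝒯_G`: stochastic matrices on `V` adapted to `G`. -/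
def TG (G : SimpleGraph V) : Set (V → V → ℝ) :=
  {q | (∀ x y, 0 ≤ q x y) ∧ (∀ x, ∑ y, q x y = 1) ∧ ∀ x y, q x y ≠ 0 → G.Adj x y}

/-- `𝒯(F)`: stochastic kernels from the vertex set of `F` to `V`, supported on `F`. -/
def TE (F : Finset (Sym2 V)) : Set (V → V → ℝ) :=
  {q | (∀ x y, 0 ≤ q x y) ∧ (∀ x, memVerts F x → ∑ y, q x y = 1) ∧
    ∀ x y, q x y ≠ 0 → s(x, y) ∈ F}

/-- `ℰ`: admissible increasing sequences of traversed edge sets. -/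
def seqE (G : SimpleGraph V) [DecidableRel G.Adj] (v₁ : V) :
    Set (Fin G.edgeFinset.card → Finset (Sym2 V)) :=
  {Es | (∀ k, Es k ⊆ G.edgeFinset) ∧ (∀ k, (Es k).card = (k : ℕ) + 1) ∧
    (∀ k l : Fin G.edgeFinset.card, (k : ℕ) + 1 = (l : ℕ) → Es k ⊂ Es l) ∧
    (∀ k : Fin G.edgeFinset.card, (k : ℕ) = 0 → ∃ e ∈ Es k, v₁ ∈ e) ∧
    (∀ k l : Fin G.edgeFinset.card, (k : ℕ) + 1 = (l : ℕ) →
      ∀ e ∈ Es l \ Es k, ∃ e' ∈ Es k, edgeAdj e e')}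

/-- The rate function `I_δ`. -/
def Ifun (G : SimpleGraph V) [DecidableRel G.Adj] (v₁ : V) (δ : ℝ) (ν : ProbMeas V) : EReal :=
  sInf { c : EReal |
    ∃ (νs : Fin G.edgeFinset.card → ProbMeas V) (r : Fin G.edgeFinset.card → ℝ)
      (Es : Fin G.edgeFinset.card → Finset (Sym2 V))
      (qs : Fin G.edgeFinset.card → V → V → ℝ),
      Es ∈ seqE G v₁ ∧ (∀ k, 0 ≤ r k) ∧ (∑ k, r k = 1) ∧
      (∀ k x, (νs k).1 x ≠ 0 → memVerts (Es k) x) ∧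
      (∀ x, ∑ k, r k * (νs k).1 x = ν.1 x) ∧
      (∀ k, qs k ∈ TE (Es k)) ∧ (∀ k, Invariant (νs k).1 (qs k)) ∧
      c = ∑ k, ((r k : ℝ) : EReal) * relEntInt (νs k).1 (qs k) (phat G δ (Es k)) }

/-- Edges traversed along a path, given as a list of consecutively visited vertices. -/
def pathEdges : List V → Finset (Sym2 V)
  | [] => ∅
  | [_] => ∅
  | x :: y :: t => insert s(x, y) (pathEdges (y :: t))

/-- Product of one-step ORRW transition probabilities along a trajectory,
the trajectory being listed in reverse chronological order. -/
def stepsProb (G : SimpleGraph V) [DecidableRel G.Adj] (δ : ℝ) : List V → ℝ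
  | [] => 1
  | [_] => 1
  | y :: x :: t => phat G δ (pathEdges (x :: t).reverse) x y * stepsProb G δ (x :: t)

/-- The law of `(X_0, …, X_n)` for the `δ`-ORRW started at `v₁`. -/
def trajProb (G : SimpleGraph V) [DecidableRel G.Adj] (δ : ℝ) (v₁ : V) (n : ℕ)
    (f : Fin (n + 1) → V) : ℝ :=
  if f 0 = v₁ then stepsProb G δ (List.ofFn f).reverse else 0

/-- `P_{v₁}(L_{n+1} ∈ C)`: the probability that the empirical measure of the first
`n+1` positions of the `δ`-ORRW lies in `C`. -/
def probEmp (G : SimpleGraph V) [DecidableRel G.Adj] (δ : ℝ) (v₁ : V) (n : ℕ)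
    (C : Set (ProbMeas V)) : ℝ :=
  ∑ f : Fin (n + 1) → V, if empMeas n f ∈ C then trajProb G δ v₁ n f else 0

/-- The family `𝒮` of edge sets of connected subgraphs having an edge at `v₁`. -/
def scrS (G : SimpleGraph V) [DecidableRel G.Adj] (v₁ : V) : Set (Finset (Sym2 V)) :=
  {F | F ⊆ G.edgeFinset ∧ (∃ e ∈ F, v₁ ∈ e) ∧
    ∀ x y : V, memVerts F x → memVerts F y →
      (SimpleGraph.fromEdgeSet (↑F : Set (Sym2 V))).Reachable x y}

/-- `𝒮₀` is a decreasing subset of `𝒮`. -/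
def DecreasingIn (G : SimpleGraph V) [DecidableRel G.Adj] (v₁ : V)
    (S0 : Set (Finset (Sym2 V))) : Prop :=
  ∀ F₁ F₂, F₁ ∈ scrS G v₁ → F₂ ∈ scrS G v₁ → F₁ ⊆ F₂ → F₂ ∈ S0 → F₁ ∈ S0

/-- `P_{v₁}(T_{𝒮₀} > n)`. -/
def probTgt (G : SimpleGraph V) [DecidableRel G.Adj] (δ : ℝ) (v₁ : V)
    (S0 : Set (Finset (Sym2 V))) (n : ℕ) : ℝ :=
  ∑ f : Fin (n + 1) → V,
    if ∀ k, 1 ≤ k → k ≤ n → pathEdges ((List.ofFn f).take (k + 1)) ∈ S0 then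
      trajProb G δ v₁ n f
    else 0

/-- `P_{v₁}(C_E > n)` for the edge cover time `C_E`. -/
def probCgt (G : SimpleGraph V) [DecidableRel G.Adj] (δ : ℝ) (v₁ : V) (n : ℕ) : ℝ :=
  ∑ f : Fin (n + 1) → V,
    if ¬ G.edgeFinset ⊆ pathEdges (List.ofFn f) then trajProb G δ v₁ n f else 0

/-- `E_{v₁}[exp (α T_{𝒮₀})]`, valued in `ℝ≥0∞`; the stopping time takes values in
`{1, 2, …} ∪ {∞}`. -/
def expT (G : SimpleGraph V) [DecidableRel G.Adj] (δ : ℝ) (v₁ : V)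
    (S0 : Set (Finset (Sym2 V))) (α : ℝ) : ℝ≥0∞ :=
  (∑' n : ℕ, ENNReal.ofReal
      (Real.exp (α * (n + 1)) * (probTgt G δ v₁ S0 n - probTgt G δ v₁ S0 (n + 1)))) +
    (if 0 < α then (⊤ : ℝ≥0∞) else if α = 0 then 1 else 0) *
      ENNReal.ofReal (⨅ n : ℕ, probTgt G δ v₁ S0 n)

/-- `E_{v₁}[exp (α C_E)]`, valued in `ℝ≥0∞`. -/
def expC (G : SimpleGraph V) [DecidableRel G.Adj] (δ : ℝ) (v₁ : V) (α : ℝ) : ℝ≥0∞ :=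
  (∑' n : ℕ, ENNReal.ofReal
      (Real.exp (α * (n + 1)) * (probCgt G δ v₁ n - probCgt G δ v₁ (n + 1)))) +
    (if 0 < α then (⊤ : ℝ≥0∞) else if α = 0 then 1 else 0) *
      ENNReal.ofReal (⨅ n : ℕ, probCgt G δ v₁ n)

/-- The critical exponent `α_c(δ)` attached to a family `𝒮₀` of edge sets. -/
def alphaC (G : SimpleGraph V) [DecidableRel G.Adj] (δ : ℝ)
    (S0 : Set (Finset (Sym2 V))) : EReal :=
  sInf { c : EReal | ∃ (ν : ProbMeas V) (F : Finset (Sym2 V)) (q : V → V → ℝ),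
    F ∈ S0 ∧ q ∈ TE F ∧ (∀ x, ν.1 x ≠ 0 → memVerts F x) ∧ Invariant ν.1 q ∧
    c = relEntInt ν.1 q (phat G δ F) }

/-- `α_c^1(δ)`: the critical exponent for the cover time. -/
def alphaC1 (G : SimpleGraph V) [DecidableRel G.Adj] (v₁ : V) (δ : ℝ) : EReal :=
  alphaC G δ (scrS G v₁ \ {G.edgeFinset})

end Graph

section Lifted

variable {V : Type} [Fintype V] [LinearOrder V]

/-- Smaller endpoint of an unordered pair. -/
def sym2lo (e : Sym2 V) : V := Sym2.lift ⟨fun a b => min a b, fun a b => min_comm a b⟩ e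

/-- Larger endpoint of an unordered pair. -/
def sym2hi (e : Sym2 V) : V := Sym2.lift ⟨fun a b => max a b, fun a b => max_comm a b⟩ e

/-- `V_S = E × {-1, 1}`: vertex set of the lifted directed graph `S`
(`true` plays the role of `+1`). -/
abbrev VSet (G : SimpleGraph V) [DecidableRel G.Adj] : Type :=
  {e : Sym2 V // e ∈ G.edgeFinset} × Bool

/-- Tail `z⁻` of an oriented edge. -/
def zm (G : SimpleGraph V) [DecidableRel G.Adj] (z : VSet G) : V :=
  if z.2 then sym2lo z.1.1 else sym2hi z.1.1

/-- Head `z⁺` of an oriented edge. -/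
def zp (G : SimpleGraph V) [DecidableRel G.Adj] (z : VSet G) : V :=
  if z.2 then sym2hi z.1.1 else sym2lo z.1.1

/-- The kernel `p_F` on the lifted directed graph `S`. -/
def pS (G : SimpleGraph V) [DecidableRel G.Adj] (δ : ℝ) (F : Finset (Sym2 V))
    (z₁ z₂ : VSet G) : ℝ :=
  if zp G z₁ = zm G z₂ then
    gw δ F z₂.1.1 / ∑ w : VSet G, (if zp G z₁ = zm G w then gw δ F w.1.1 else 0)
  else 0

/-- `𝒯_S`: stochastic matrices on `V_S` moving along orientations. -/
def TS (G : SimpleGraph V) [DecidableRel G.Adj] : Set (VSet G → VSet G → ℝ) :=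
  {q | (∀ z w, 0 ≤ q z w) ∧ (∀ z, ∑ w, q z w = 1) ∧ ∀ z w, q z w ≠ 0 → zp G z = zm G w}

/-- `𝒞(𝒮₀)`: probability measures on `V_S` whose first marginal is supported in
some member of `𝒮₀`. -/
def CC (G : SimpleGraph V) [DecidableRel G.Adj] (S0 : Set (Finset (Sym2 V))) :
    Set (ProbMeas (VSet G)) :=
  {μ | ∃ F ∈ S0, ∀ z : VSet G, μ.1 z ≠ 0 → z.1.1 ∈ F}

/-- `Λ_{δ,𝒮₀}`. -/
def Lam (G : SimpleGraph V) [DecidableRel G.Adj] (v₁ : V) (δ : ℝ)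
    (S0 : Set (Finset (Sym2 V))) (μ : ProbMeas (VSet G)) : EReal :=
  sInf { c : EReal |
    ∃ (μs : Fin G.edgeFinset.card → ProbMeas (VSet G)) (r : Fin G.edgeFinset.card → ℝ)
      (Es : Fin G.edgeFinset.card → Finset (Sym2 V))
      (qs : Fin G.edgeFinset.card → VSet G → VSet G → ℝ),
      Es ∈ seqE G v₁ ∧ (∀ k, 0 ≤ r k) ∧ (∀ k, Es k ∉ S0 → r k = 0) ∧ (∑ k, r k = 1) ∧
      (∀ k z, (μs k).1 z ≠ 0 → z.1.1 ∈ Es k) ∧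
      (∀ z, ∑ k, r k * (μs k).1 z = μ.1 z) ∧
      (∀ k, qs k ∈ TS G) ∧ (∀ k, Invariant (μs k).1 (qs k)) ∧
      c = ∑ k, ((r k : ℝ) : EReal) * relEntInt (μs k).1 (qs k) (pS G δ (Es k)) }

/-- `Λ^z_{δ,𝒮₀}`. -/
def LamZ (G : SimpleGraph V) [DecidableRel G.Adj] (v₁ : V) (δ : ℝ)
    (S0 : Set (Finset (Sym2 V))) (z : VSet G) (μ : ProbMeas (VSet G)) : EReal :=
  sInf { c : EReal |
    ∃ (μs : Fin G.edgeFinset.card → ProbMeas (VSet G)) (r : Fin G.edgeFinset.card → ℝ)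
      (Es : Fin G.edgeFinset.card → Finset (Sym2 V))
      (qs : Fin G.edgeFinset.card → VSet G → VSet G → ℝ),
      Es ∈ seqE G v₁ ∧ (∀ k : Fin G.edgeFinset.card, (k : ℕ) = 0 → Es k = {z.1.1}) ∧
      (∀ k, 0 ≤ r k) ∧ (∀ k, Es k ∉ S0 → r k = 0) ∧ (∑ k, r k = 1) ∧
      (∀ k w, (μs k).1 w ≠ 0 → w.1.1 ∈ Es k) ∧
      (∀ w, ∑ k, r k * (μs k).1 w = μ.1 w) ∧
      (∀ k, qs k ∈ TS G) ∧ (∀ k, Invariant (μs k).1 (qs k)) ∧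
      c = ∑ k, ((r k : ℝ) : EReal) * relEntInt (μs k).1 (qs k) (pS G δ (Es k)) }

/-- `Λ₁`: the Donsker–Varadhan functional for the simple random walk on `S`
(whose kernel is `pS` with `δ = 1`). -/
def Lam1 (G : SimpleGraph V) [DecidableRel G.Adj] (μ : ProbMeas (VSet G)) : EReal :=
  sInf { c : EReal | ∃ q ∈ TS G, Invariant μ.1 q ∧ c = relEntInt μ.1 q (pS G 1 ∅) }

/-- Boundary `∂F` of an edge set: edges of `F` adjacent to some edge outside `F`. -/
def bdry (G : SimpleGraph V) [DecidableRel G.Adj] (F : Finset (Sym2 V)) : Finset (Sym2 V) :=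
  F.filter fun e => ∃ e' ∈ G.edgeFinset \ F, edgeAdj e e'

/-- Out-degree `d(z)` of `z` in `S`. -/
def outDeg (G : SimpleGraph V) [DecidableRel G.Adj] (z : VSet G) : ℕ :=
  (Finset.univ.filter (fun w : VSet G => zp G z = zm G w)).card

/-- Number `k(z)` of out-neighbours of `z` lying in `F × {-1, 1}`. -/
def outDegIn (G : SimpleGraph V) [DecidableRel G.Adj] (F : Finset (Sym2 V))
    (z : VSet G) : ℕ :=
  (Finset.univ.filter (fun w : VSet G => zp G z = zm G w ∧ w.1.1 ∈ F)).card

/-- The law of `(Z_0, …, Z_n)` for the lifted `δ`-ORRW conditioned on `Z_0 = z`. -/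
def liftTraj (G : SimpleGraph V) [DecidableRel G.Adj] (δ : ℝ) (z : VSet G) (n : ℕ)
    (g : Fin (n + 1) → VSet G) : ℝ :=
  if g 0 = z then
    ∏ i : Fin n,
      pS G δ ((Finset.Iic i.castSucc).image (fun j => (g j).1.1))
        (g i.castSucc) (g i.succ)
  else 0

/-- The restricted logarithmic Laplace functional `W^{n+1}_{𝒮₀}(z)`. -/
def Wres (G : SimpleGraph V) [DecidableRel G.Adj] (δ : ℝ) (z : VSet G)
    (S0 : Set (Finset (Sym2 V))) (h : ProbMeas (VSet G) → ℝ) (n : ℕ) : EReal :=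
  if 0 < ∑ g : Fin (n + 1) → VSet G,
      (if empMeas n g ∈ CC G S0 then liftTraj G δ z n g else 0) then
    ((-((((n : ℝ) + 1))⁻¹ * Real.log (∑ g : Fin (n + 1) → VSet G,
      if empMeas n g ∈ CC G S0 then
        Real.exp (-((n : ℝ) + 1) * h (empMeas n g)) * liftTraj G δ z n g
      else 0)) : ℝ) : EReal)
  else (⊤ : EReal)

end Lifted

/-!
For an edge `xy` of the traversed set `F` one has `1 / p̂_F(x, y) = ∑_z g(δ, F, xz) / δ`, where each
summand is `1` or `1 / δ`. Hence `p̂_F` increases with `δ` on `F`, so every admissible tuple becomes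
cheaper when `δ` grows, and so does the infimum.

Strictness is seen at the uniform measure on the endpoints of an edge `vw`. It can only be generated
by jumping back and forth across `vw`, at cost `-(log p̂_F(v, w) + log p̂_F(w, v)) / 2` per unit of
time. For `δ ≥ 1` this is minimal for `F = {vw}`, and it is then strictly decreasing in `δ` as soon
as another edge touches `vw`.
-/

lemma eq_single_of_sum_eq_one {A : Type*} [Fintype A] [DecidableEq A] {f : A → ℝ}
    (hf : ∀ a, 0 ≤ f a) (hf_sum : ∑ a, f a = 1) {a : A} (ha : f a = 1) : f = Pi.single a 1 := by
  have hrest : ∑ b ∈ Finset.univ.erase a, f b = 0 := by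
    linarith [Finset.add_sum_erase Finset.univ f (Finset.mem_univ a)]
  ext b
  rcases eq_or_ne b a with rfl | hb
  · simp [ha]
  · rw [Pi.single_eq_of_ne hb]
    exact (Finset.sum_eq_zero_iff_of_nonneg fun b _ ↦ hf b).1 hrest b (by simp [hb])

lemma coe_le_sum_coe_mul {ι : Type*} [Fintype ι] {r : ι → ℝ} (hr : ∀ i, 0 ≤ r i)
    (hr_sum : ∑ i, r i = 1) {c : ℝ} {C : ι → EReal} (hC : ∀ i, r i ≠ 0 → (c : EReal) ≤ C i) :
    (c : EReal) ≤ ∑ i, (r i : EReal) * C i := by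
  let coeHom : ℝ →+ EReal := ⟨⟨Real.toEReal, EReal.coe_zero⟩, EReal.coe_add⟩
  calc (c : EReal) = coeHom (∑ i, r i * c) := by rw [← Finset.sum_mul, hr_sum, one_mul]; rfl
    _ = ∑ i, (r i : EReal) * c := by rw [map_sum]; exact Finset.sum_congr rfl fun _ _ ↦ rfl
    _ ≤ ∑ i, (r i : EReal) * C i := Finset.sum_le_sum fun i _ ↦ by
      rcases eq_or_ne (r i) 0 with h0 | h0
      · simp [h0]
      · exact mul_le_mul_of_nonneg_left (hC i h0) (mod_cast hr i)

section RelativeEntropy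

variable {A : Type} [Fintype A]

lemma relEnt_anti_right {γ ρ ρ' : A → ℝ} (hγ : ∀ a, 0 ≤ γ a) (hρ : ∀ a, 0 ≤ ρ a)
    (hle : ∀ a, γ a ≠ 0 → ρ a ≤ ρ' a) : relEnt γ ρ' ≤ relEnt γ ρ := by
  by_cases hac : ∀ a, ρ a = 0 → γ a = 0
  swap
  · simp [relEnt, hac]
  have hρ_pos : ∀ a, γ a ≠ 0 → 0 < ρ a := fun a ha ↦ (hρ a).lt_of_ne' (mt (hac a) ha)
  have hac' : ∀ a, ρ' a = 0 → γ a = 0 := fun a ha ↦ by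
    by_contra hγa
    linarith [hρ_pos a hγa, hle a hγa]
  rw [relEnt, relEnt, if_pos hac, if_pos hac', EReal.coe_le_coe_iff]
  refine Finset.sum_le_sum fun a _ ↦ ?_
  rcases eq_or_ne (γ a) 0 with h0 | h0
  · simp [h0]
  have hγa : 0 < γ a := (hγ a).lt_of_ne' h0
  have hρa := hρ_pos a h0
  have hρa' : 0 < ρ' a := hρa.trans_le (hle a h0)
  have hle_a := hle a h0
  gcongr

lemma relEntInt_anti_right {ν : A → ℝ} {q p p' : A → A → ℝ} (hν : ∀ x, 0 ≤ ν x)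
    (hq : ∀ x y, 0 ≤ q x y) (hp : ∀ x y, 0 ≤ p x y) (hle : ∀ x y, q x y ≠ 0 → p x y ≤ p' x y) :
    relEntInt ν q p' ≤ relEntInt ν q p :=
  Finset.sum_le_sum fun x _ ↦ mul_le_mul_of_nonneg_left
    (relEnt_anti_right (hq x) (hp x) (hle x)) (mod_cast hν x)

lemma relEnt_single [DecidableEq A] {ρ : A → ℝ} {a : A} (ha : ρ a ≠ 0) :
    relEnt (Pi.single a 1) ρ = ((-Real.log (ρ a) : ℝ) : EReal) := by
  have hac : ∀ b, ρ b = 0 → (Pi.single a 1 : A → ℝ) b = 0 := fun b hb ↦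
    Pi.single_eq_of_ne (by rintro rfl; exact ha hb) 1
  rw [relEnt, if_pos hac, Fintype.sum_eq_single a fun b hb ↦ by simp [Pi.single_eq_of_ne hb]]
  simp

end RelativeEntropy

section EdgeMeasure

lemma Invariant.apply_eq_mul {A : Type} [Fintype A] {ν : A → ℝ} {q : A → A → ℝ} {v w : A}
    (hinv : Invariant ν q) (hsupp : ∀ x, x ≠ v → x ≠ w → ν x = 0) (hqw : q w w = 0) :
    ν w = ν v * q v w := by
  rw [← hinv w, Fintype.sum_eq_single v fun x hv ↦ ?_]
  rcases eq_or_ne x w with rfl | hw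
  · rw [hqw, mul_zero]
  · rw [hsupp x hv hw, zero_mul]

variable {A : Type} [Fintype A] [DecidableEq A]

/-- The uniform distribution on the endpoints of an edge `vw`, at which the rate functions are
compared strictly; `v = w` gives the Dirac mass. -/
def edgeMeasure (v w : A) : ProbMeas A :=
  ⟨fun x ↦ ((Pi.single v 1 : A → ℝ) x + (Pi.single w 1 : A → ℝ) x) / 2,
    fun x ↦ by simp only [Pi.single_apply]; positivity,
    by rw [← Finset.sum_div, Finset.sum_add_distrib]; norm_num⟩

variable {v w : A} {q p : A → A → ℝ}

lemma edgeMeasure_apply_eq_zero {x : A} (hv : x ≠ v) (hw : x ≠ w) :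
    (edgeMeasure v w).1 x = 0 := by
  simp [edgeMeasure, hv, hw]

lemma edgeMeasure_comm (v w : A) : edgeMeasure v w = edgeMeasure w v :=
  Subtype.ext <| funext fun x ↦ by simp only [edgeMeasure, add_comm]

lemma edgeMeasure_left (hvw : v ≠ w) : (edgeMeasure v w).1 v = 1 / 2 := by
  simp [edgeMeasure, hvw]

lemma edgeMeasure_right (hvw : v ≠ w) : (edgeMeasure v w).1 w = 1 / 2 := by
  rw [edgeMeasure_comm, edgeMeasure_left hvw.symm]

lemma eq_edgeMeasure {ν : ProbMeas A} (hvw : v ≠ w) (hsupp : ∀ x, x ≠ v → x ≠ w → ν.1 x = 0)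
    (heq : ν.1 v = ν.1 w) : ν = edgeMeasure v w := by
  have hsum : ν.1 v + ν.1 w = 1 :=
    (Fintype.sum_eq_add v w hvw fun x hx ↦ hsupp x hx.1 hx.2).symm.trans ν.2.2
  ext x
  rcases eq_or_ne x v with rfl | hv
  · rw [edgeMeasure_left hvw]
    linarith
  rcases eq_or_ne x w with rfl | hw
  · rw [edgeMeasure_right hvw]
    linarith
  · rw [hsupp x hv hw, edgeMeasure_apply_eq_zero hv hw]

lemma invariant_edgeMeasure (hqv : q v = Pi.single w 1) (hqw : q w = Pi.single v 1) :
    Invariant (edgeMeasure v w).1 q := by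
  intro y
  have hsum : ∑ x, (edgeMeasure v w).1 x * q x y = (q v y + q w y) / 2 := by
    simp [edgeMeasure, div_mul_eq_mul_div, ← Finset.sum_div, add_mul, Finset.sum_add_distrib,
      Pi.single_apply]
  rw [hsum, hqv, hqw, add_comm]
  rfl

lemma relEntInt_edgeMeasure (hvw : v ≠ w) (hqv : q v = Pi.single w 1) (hqw : q w = Pi.single v 1)
    (hpv : p v w ≠ 0) (hpw : p w v ≠ 0) :
    relEntInt (edgeMeasure v w).1 q p =
      ((-(Real.log (p v w) + Real.log (p w v)) / 2 : ℝ) : EReal) := by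
  rw [relEntInt, Fintype.sum_eq_add v w hvw fun x hx ↦ by
    rw [edgeMeasure_apply_eq_zero hx.1 hx.2, EReal.coe_zero, zero_mul]]
  rw [edgeMeasure_left hvw, edgeMeasure_right hvw, hqv, hqw, relEnt_single hpv, relEnt_single hpw]
  norm_cast
  ring

end EdgeMeasure

section Kernels

variable {V : Type} {F : Finset (Sym2 V)} {q : V → V → ℝ} {v w x y : V}

lemma memVerts_left (hF : s(x, y) ∈ F) : memVerts F x := ⟨_, hF, Sym2.mem_mk_left x y⟩

lemma memVerts_right (hF : s(x, y) ∈ F) : memVerts F y := ⟨_, hF, Sym2.mem_mk_right x y⟩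

lemma memVerts.exists_mk_mem (hx : memVerts F x) : ∃ y, s(x, y) ∈ F := by
  obtain ⟨e, he, hxe⟩ := hx
  obtain ⟨y, rfl⟩ := Sym2.mem_iff_exists.1 hxe
  exact ⟨y, he⟩

variable [Fintype V]

lemma TE_nonempty (F : Finset (Sym2 V)) : (TE F).Nonempty := by
  choose! next hnext using fun x (hx : memVerts F x) ↦ hx.exists_mk_mem
  refine ⟨fun x ↦ if memVerts F x then Pi.single (next x) 1 else 0, fun x y ↦ ?_, fun x hx ↦ ?_,
    fun x y hxy ↦ ?_⟩
  · by_cases hx : memVerts F x <;> simp [hx, Pi.single_apply, apply_ite]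
  · simp [hx]
  · have hx : memVerts F x := by
      by_contra hx
      simp [hx] at hxy
    obtain rfl : y = next x := by
      by_contra hy
      simp [hx, hy] at hxy
    exact hnext x hx

lemma mul_le_of_mem_TE (hq : q ∈ TE F) {ν : ProbMeas V}
    (hν : ∀ x, ν.1 x ≠ 0 → memVerts F x) (x y : V) : ν.1 x * q x y ≤ ν.1 x := by
  rcases eq_or_ne (ν.1 x) 0 with h0 | h0
  · simp [h0]
  · refine mul_le_of_le_one_right (ν.2.1 x) ?_
    rw [← hq.2.1 x (hν x h0)]
    exact Finset.single_le_sum (fun z _ ↦ hq.1 x z) (Finset.mem_univ y)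

variable [DecidableEq V]

lemma memVerts_of_edgeMeasure_ne_zero (hF : s(v, w) ∈ F)
    (hx : (edgeMeasure v w).1 x ≠ 0) : memVerts F x := by
  by_contra hxF
  exact hx (edgeMeasure_apply_eq_zero (fun h ↦ hxF (h ▸ memVerts_left hF))
    fun h ↦ hxF (h ▸ memVerts_right hF))

lemma update_single_mem_TE (hq : q ∈ TE F) (hF : s(x, y) ∈ F) :
    Function.update q x (Pi.single y 1) ∈ TE F := by
  obtain ⟨hq_nonneg, hq_sum, hq_supp⟩ := hq
  refine ⟨fun a b ↦ ?_, fun a ha ↦ ?_, fun a b hab ↦ ?_⟩ <;> rcases eq_or_ne a x with rfl | hax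
  · simpa using (Pi.single_nonneg.2 zero_le_one : 0 ≤ (Pi.single y 1 : V → ℝ)) b
  · simpa [hax] using hq_nonneg a b
  · simp
  · simpa [hax] using hq_sum a ha
  · obtain rfl : b = y := by
      by_contra hby
      simp [hby] at hab
    exact hF
  · exact hq_supp a b (by simpa [hax] using hab)

lemma exists_mem_TE_eq_single (hvw : v ≠ w) (hF : s(v, w) ∈ F) :
    ∃ q ∈ TE F, q v = Pi.single w 1 ∧ q w = Pi.single v 1 := by
  obtain ⟨q, hq⟩ := TE_nonempty F
  refine ⟨_, update_single_mem_TE (update_single_mem_TE hq hF) (Sym2.eq_swap ▸ hF), ?_, ?_⟩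
  · simp [hvw]
  · simp

lemma eq_edgeMeasure_of_invariant (hloop : ∀ x, s(x, x) ∉ F) (hq : q ∈ TE F) {ν : ProbMeas V}
    (hν : ∀ x, ν.1 x ≠ 0 → memVerts F x) (hinv : Invariant ν.1 q) (hvw : v ≠ w)
    (hsupp : ∀ x, x ≠ v → x ≠ w → ν.1 x = 0) : ν = edgeMeasure v w := by
  have hdiag : ∀ x, q x x = 0 := fun x ↦ not_imp_comm.1 (hq.2.2 x x) (hloop x)
  have hw : ν.1 w = ν.1 v * q v w := hinv.apply_eq_mul hsupp (hdiag w)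
  have hv : ν.1 v = ν.1 w * q w v := hinv.apply_eq_mul (fun x hw hv ↦ hsupp x hv hw) (hdiag v)
  exact eq_edgeMeasure hvw hsupp (le_antisymm
    (hv.trans_le (mul_le_of_mem_TE hq hν w v)) (hw.trans_le (mul_le_of_mem_TE hq hν v w)))

lemma eq_single_of_invariant_edgeMeasure (hloop : ∀ x, s(x, x) ∉ F) (hq : q ∈ TE F)
    (hv : memVerts F v) (hinv : Invariant (edgeMeasure v w).1 q) (hvw : v ≠ w) :
    q v = Pi.single w 1 := by
  have hdiag : q w w = 0 := not_imp_comm.1 (hq.2.2 w w) (hloop w)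
  have hqvw : q v w = 1 := by
    have h := hinv.apply_eq_mul (fun _ ↦ edgeMeasure_apply_eq_zero) hdiag
    rw [edgeMeasure_left hvw, edgeMeasure_right hvw] at h
    linarith
  exact eq_single_of_sum_eq_one (hq.1 v) (hq.2.1 v hv) hqvw

end Kernels

section TransitionKernel

variable {V : Type} [DecidableEq V] {δ δ' : ℝ} {F F' : Finset (Sym2 V)}

lemma gw_pos (hδ : 0 < δ) (F : Finset (Sym2 V)) (e : Sym2 V) : 0 < gw δ F e := by
  unfold gw
  split_ifs
  exacts [hδ, one_pos]

lemma gw_mono (hδ : 1 ≤ δ) (hF : F ⊆ F') (e : Sym2 V) : gw δ F e ≤ gw δ F' e := by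
  unfold gw
  split_ifs with h h'
  exacts [le_rfl, absurd (hF h) h', hδ, le_rfl]

lemma gw_div_anti (hδ : 0 < δ) (hδδ' : δ ≤ δ') (F : Finset (Sym2 V)) (e : Sym2 V) :
    gw δ' F e / δ' ≤ gw δ F e / δ := by
  have hδ' : 0 < δ' := hδ.trans_le hδδ'
  unfold gw
  split_ifs
  · rw [div_self hδ.ne', div_self hδ'.ne']
  · gcongr

lemma gw_div_strictAnti (hδ : 0 < δ) (hδδ' : δ < δ') {e : Sym2 V} (he : e ∉ F) :
    gw δ' F e / δ' < gw δ F e / δ := by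
  simpa [gw, he] using inv_strictAnti₀ hδ hδδ'

variable [Fintype V] {G : SimpleGraph V} [DecidableRel G.Adj] {x y z : V}

lemma sum_gw_div_pos (hδ : 0 < δ) (F : Finset (Sym2 V)) (hxy : G.Adj x y) :
    0 < ∑ z ∈ G.neighborFinset x, gw δ F s(x, z) / δ :=
  Finset.sum_pos (fun _ _ ↦ div_pos (gw_pos hδ _ _) hδ) ⟨y, by simpa using hxy⟩

lemma phat_eq_inv (hxy : G.Adj x y) (hF : s(x, y) ∈ F) :
    phat G δ F x y = (∑ z ∈ G.neighborFinset x, gw δ F s(x, z) / δ)⁻¹ := by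
  rw [phat, if_pos hxy, gw, if_pos hF, ← Finset.sum_div, inv_div]

lemma phat_pos (hδ : 0 < δ) (F : Finset (Sym2 V)) (hxy : G.Adj x y) : 0 < phat G δ F x y := by
  rw [phat, if_pos hxy]
  exact div_pos (gw_pos hδ _ _)
    (Finset.sum_pos (fun _ _ ↦ gw_pos hδ _ _) ⟨y, by simpa using hxy⟩)

lemma phat_nonneg (hδ : 0 < δ) (F : Finset (Sym2 V)) (x y : V) : 0 ≤ phat G δ F x y := by
  by_cases hxy : G.Adj x y
  · exact (phat_pos hδ F hxy).le
  · simp [phat, hxy]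

lemma phat_mono_param (hδ : 0 < δ) (hδδ' : δ ≤ δ') (hF : s(x, y) ∈ F) :
    phat G δ F x y ≤ phat G δ' F x y := by
  by_cases hxy : G.Adj x y
  · rw [phat_eq_inv hxy hF, phat_eq_inv hxy hF]
    exact inv_anti₀ (sum_gw_div_pos (hδ.trans_le hδδ') F hxy)
      (Finset.sum_le_sum fun _ _ ↦ gw_div_anti hδ hδδ' F _)
  · simp [phat, hxy]

lemma phat_strictMono_param (hδ : 0 < δ) (hδδ' : δ < δ') (hxy : G.Adj x y) (hF : s(x, y) ∈ F)
    (hxz : G.Adj x z) (hzF : s(x, z) ∉ F) : phat G δ F x y < phat G δ' F x y := by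
  rw [phat_eq_inv hxy hF, phat_eq_inv hxy hF]
  exact inv_strictAnti₀ (sum_gw_div_pos (hδ.trans hδδ') F hxy)
    (Finset.sum_lt_sum (fun _ _ ↦ gw_div_anti hδ hδδ'.le F _)
      ⟨z, by simpa using hxz, gw_div_strictAnti hδ hδδ' hzF⟩)

lemma phat_anti_edges (hδ : 1 ≤ δ) (hFF' : F ⊆ F') (hF : s(x, y) ∈ F) :
    phat G δ F' x y ≤ phat G δ F x y := by
  have hδ₀ : 0 < δ := one_pos.trans_le hδ
  by_cases hxy : G.Adj x y
  · rw [phat_eq_inv hxy hF, phat_eq_inv hxy (hFF' hF)]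
    refine inv_anti₀ (sum_gw_div_pos hδ₀ F hxy) (Finset.sum_le_sum fun z _ ↦ ?_)
    gcongr
    exact gw_mono hδ hFF' _
  · simp [phat, hxy]

end TransitionKernel

section EdgeRate

variable {V : Type} [Fintype V] [DecidableEq V] {G : SimpleGraph V} [DecidableRel G.Adj]
  {δ δ' : ℝ} {F F' : Finset (Sym2 V)} {v w x z : V}

/-- The entropy cost per unit of time of the deterministic walk that jumps back and forth across the
edge `vw`, relative to `p̂_F`. -/
def edgeRate (G : SimpleGraph V) [DecidableRel G.Adj] (δ : ℝ) (F : Finset (Sym2 V)) (v w : V) : ℝ :=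
  -(Real.log (phat G δ F v w) + Real.log (phat G δ F w v)) / 2

lemma edgeRate_comm (δ : ℝ) (F : Finset (Sym2 V)) (v w : V) :
    edgeRate G δ F v w = edgeRate G δ F w v := by
  rw [edgeRate, edgeRate, add_comm]

lemma edgeRate_mono_edges (hδ : 1 ≤ δ) (hFF' : F ⊆ F') (hvw : G.Adj v w) (hF : s(v, w) ∈ F) :
    edgeRate G δ F v w ≤ edgeRate G δ F' v w := by
  have hδ₀ : 0 < δ := one_pos.trans_le hδ
  have hlog_v := Real.log_le_log (phat_pos hδ₀ F' hvw) (phat_anti_edges hδ hFF' hF)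
  have hlog_w := Real.log_le_log (phat_pos hδ₀ F' hvw.symm)
    (phat_anti_edges hδ hFF' (Sym2.eq_swap ▸ hF))
  unfold edgeRate
  linarith

lemma edgeRate_strictAnti_param_left (hδ : 0 < δ) (hδδ' : δ < δ') (hvw : G.Adj v w)
    (hF : s(v, w) ∈ F) (hvz : G.Adj v z) (hzF : s(v, z) ∉ F) :
    edgeRate G δ' F v w < edgeRate G δ F v w := by
  have hlog_v := Real.log_lt_log (phat_pos hδ F hvw)
    (phat_strictMono_param hδ hδδ' hvw hF hvz hzF)
  have hlog_w := Real.log_le_log (phat_pos hδ F hvw.symm)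
    (phat_mono_param hδ hδδ'.le (Sym2.eq_swap ▸ hF))
  unfold edgeRate
  linarith

lemma edgeRate_strictAnti_param (hδ : 0 < δ) (hδδ' : δ < δ') (hvw : G.Adj v w)
    (hF : s(v, w) ∈ F) (hx : x ∈ s(v, w)) (hxz : G.Adj x z) (hzF : s(x, z) ∉ F) :
    edgeRate G δ' F v w < edgeRate G δ F v w := by
  rcases Sym2.mem_iff.1 hx with rfl | rfl
  · exact edgeRate_strictAnti_param_left hδ hδδ' hvw hF hxz hzF
  · rw [edgeRate_comm δ', edgeRate_comm δ]
    exact edgeRate_strictAnti_param_left hδ hδδ' hvw.symm (Sym2.eq_swap ▸ hF) hxz hzF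

end EdgeRate

section EdgeSequences

lemma two_le_card_edgeFinset {V : Type*} [Fintype V] {G : SimpleGraph V} [Fintype G.edgeSet]
    (hG : G.Connected) (hV : 3 ≤ Fintype.card V) : 2 ≤ G.edgeFinset.card := by
  have h := hG.card_vert_le_card_edgeSet_add_one
  rw [Nat.card_eq_fintype_card, Nat.card_eq_fintype_card, ← G.edgeFinset_card] at h
  omega

lemma exists_greedy_chain {α : Type*} [DecidableEq α] {E : Finset α} {r : α → α → Prop}
    (hext : ∀ F ⊂ E, F.Nonempty → ∃ b ∈ E \ F, ∃ c ∈ F, r b c) {a : α} (ha : a ∈ E) :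
    ∃ Fs : ℕ → Finset α, Fs 0 = {a} ∧ (∀ k < E.card, Fs k ⊆ E ∧ (Fs k).card = k + 1) ∧
      ∀ k, k + 1 < E.card → ∃ b ∉ Fs k, Fs (k + 1) = insert b (Fs k) ∧ ∃ c ∈ Fs k, r b c := by
  have : Nonempty α := ⟨a⟩
  choose! next hnext_mem hnext_rel using hext
  let Fs : ℕ → Finset α := Nat.rec {a} fun _ F ↦ insert (next F) F
  have hproper : ∀ k, k + 1 < E.card → Fs k ⊆ E → (Fs k).card = k + 1 →
      Fs k ⊂ E ∧ (Fs k).Nonempty := fun k hk hsub hcard ↦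
    ⟨hsub.ssubset_of_ne fun h ↦ by rw [h] at hcard; omega, Finset.card_pos.1 (by omega)⟩
  have hspec : ∀ k < E.card, Fs k ⊆ E ∧ (Fs k).card = k + 1 := by
    intro k hk
    induction k with
    | zero => simpa [Fs] using ha
    | succ k ih =>
      obtain ⟨hsub, hcard⟩ := ih (by omega)
      obtain ⟨hss, hne⟩ := hproper k hk hsub hcard
      obtain ⟨hmem, hnotMem⟩ := Finset.mem_sdiff.1 (hnext_mem _ hss hne)
      exact ⟨Finset.insert_subset hmem hsub,
        (Finset.card_insert_of_notMem hnotMem).trans (congrArg (· + 1) hcard)⟩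
  refine ⟨Fs, rfl, hspec, fun k hk ↦ ?_⟩
  obtain ⟨hsub, hcard⟩ := hspec k (by omega)
  obtain ⟨hss, hne⟩ := hproper k hk hsub hcard
  exact ⟨next (Fs k), (Finset.mem_sdiff.1 (hnext_mem _ hss hne)).2, rfl, hnext_rel _ hss hne⟩

variable {V : Type} [Fintype V] [DecidableEq V] {G : SimpleGraph V} [DecidableRel G.Adj]
  {v₁ : V} {F : Finset (Sym2 V)} {Es : Fin G.edgeFinset.card → Finset (Sym2 V)}

lemma monotone_of_mem_seqE (hEs : Es ∈ seqE G v₁) : Monotone Es := by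
  rintro ⟨k, hk⟩ ⟨l, hl⟩ (hkl : k ≤ l)
  induction l, hkl using Nat.le_induction with
  | base => exact le_rfl
  | succ l _ ih =>
    have hl' : l < G.edgeFinset.card := by omega
    exact (ih hl').trans (hEs.2.2.1 ⟨l, hl'⟩ ⟨l + 1, hl⟩ rfl).subset

lemma exists_first_edge_of_mem_seqE (hEs : Es ∈ seqE G v₁) (hcard : 2 ≤ G.edgeFinset.card) :
    ∃ w, Es ⟨0, by omega⟩ = {s(v₁, w)} ∧
      ∃ x ∈ s(v₁, w), ∃ z, G.Adj x z ∧ s(x, z) ∉ ({s(v₁, w)} : Finset (Sym2 V)) := by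
  obtain ⟨hsub, hcardE, hstep, hfirst, hadj⟩ := hEs
  obtain ⟨e, he, hve⟩ := hfirst ⟨0, by omega⟩ rfl
  obtain ⟨w, rfl⟩ := Sym2.mem_iff_exists.1 hve
  have hE₀ : Es ⟨0, by omega⟩ = {s(v₁, w)} := by
    obtain ⟨e, hsingle⟩ := Finset.card_eq_one.1 (hcardE ⟨0, by omega⟩)
    rw [hsingle, Finset.mem_singleton] at he
    rw [hsingle, he]
  obtain ⟨f, hfE₁, hfE₀⟩ := Finset.exists_of_ssubset (hstep ⟨0, by omega⟩ ⟨1, by omega⟩ rfl)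
  obtain ⟨e', he', x, hxf, hxe'⟩ :=
    hadj ⟨0, by omega⟩ ⟨1, by omega⟩ rfl f (Finset.mem_sdiff.2 ⟨hfE₁, hfE₀⟩)
  obtain ⟨z, rfl⟩ := Sym2.mem_iff_exists.1 hxf
  rw [hE₀] at he' hfE₀
  exact ⟨w, hE₀, x, Finset.mem_singleton.1 he' ▸ hxe', z, by simpa using hsub _ hfE₁, hfE₀⟩

lemma exists_edgeAdj_of_ssubset (hG : G.Connected) (hF : F ⊂ G.edgeFinset) (hF₀ : F.Nonempty) :
    ∃ e ∈ G.edgeFinset \ F, ∃ e' ∈ F, edgeAdj e e' := by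
  suffices h : ∃ x y, G.Adj x y ∧ memVerts F x ∧ s(x, y) ∉ F by
    obtain ⟨x, y, hxy, ⟨e', he', hxe'⟩, hn⟩ := h
    exact ⟨s(x, y), by simp [hxy, hn], e', he', x, Sym2.mem_mk_left x y, hxe'⟩
  obtain ⟨f, hfG, hfF⟩ := Finset.exists_of_ssubset hF
  obtain ⟨e, he⟩ := hF₀
  induction f using Sym2.ind with | _ a b
  induction e using Sym2.ind with | _ c d
  by_cases ha : memVerts F a
  · exact ⟨a, b, by simpa using hfG, ha, hfF⟩
  · obtain ⟨walk⟩ := hG.preconnected c a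
    obtain ⟨dart, -, hfst, hsnd⟩ :=
      walk.exists_boundary_dart {x | memVerts F x} (memVerts_left he) ha
    exact ⟨dart.fst, dart.snd, dart.adj, hfst, fun h ↦ hsnd (memVerts_right h)⟩

lemma seqE_nonempty (hG : G.Connected) [Nontrivial V] (v₁ : V) : (seqE G v₁).Nonempty := by
  obtain ⟨w, hw⟩ := hG.preconnected.exists_adj_of_nontrivial v₁
  obtain ⟨Fs, hFs₀, hFs, hFs_succ⟩ := exists_greedy_chain
    (fun F ↦ exists_edgeAdj_of_ssubset hG) (show s(v₁, w) ∈ G.edgeFinset by simpa using hw)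
  refine ⟨fun k ↦ Fs k, fun k ↦ (hFs k k.2).1, fun k ↦ (hFs k k.2).2, fun k l hkl ↦ ?_,
    fun k hk ↦ ⟨s(v₁, w), by simp [hk, hFs₀], Sym2.mem_mk_left v₁ w⟩, fun k l hkl e he ↦ ?_⟩
  all_goals obtain ⟨f, hf, hins, hadj⟩ := hFs_succ k (hkl ▸ l.2)
  · simp only [← hkl, hins]
    exact Finset.ssubset_insert hf
  · simp only [← hkl, hins, Finset.insert_sdiff_cancel hf, Finset.mem_singleton] at he
    exact he ▸ hadj

end EdgeSequences

section RateFunction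

variable {V : Type} [Fintype V] [DecidableEq V] {G : SimpleGraph V} [DecidableRel G.Adj]
  {v₁ v w : V} {δ : ℝ} {F : Finset (Sym2 V)} {q : V → V → ℝ}

lemma Ifun_antitoneOn (G : SimpleGraph V) [DecidableRel G.Adj] (v₁ : V) (μ : ProbMeas V) :
    AntitoneOn (fun δ ↦ Ifun G v₁ δ μ) (Set.Ioi 0) := by
  intro δ (hδ : 0 < δ) δ' _ hδδ'
  change Ifun G v₁ δ' μ ≤ Ifun G v₁ δ μ
  refine le_sInf ?_
  rintro c ⟨νs, r, Es, qs, hE, hr, hr_sum, hsupp, hmix, hq, hinv, rfl⟩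
  calc Ifun G v₁ δ' μ
      ≤ ∑ k, (r k : EReal) * relEntInt (νs k).1 (qs k) (phat G δ' (Es k)) :=
        sInf_le ⟨νs, r, Es, qs, hE, hr, hr_sum, hsupp, hmix, hq, hinv, rfl⟩
    _ ≤ ∑ k, (r k : EReal) * relEntInt (νs k).1 (qs k) (phat G δ (Es k)) :=
        Finset.sum_le_sum fun k _ ↦ mul_le_mul_of_nonneg_left
          (relEntInt_anti_right (νs k).2.1 (hq k).1 (phat_nonneg hδ _)
            fun x y hxy ↦ phat_mono_param hδ hδδ' ((hq k).2.2 x y hxy)) (mod_cast hr k)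

lemma relEntInt_edgeMeasure_phat (hδ : 0 < δ) (hvw : G.Adj v w) (hqv : q v = Pi.single w 1)
    (hqw : q w = Pi.single v 1) :
    relEntInt (edgeMeasure v w).1 q (phat G δ F) = edgeRate G δ F v w :=
  relEntInt_edgeMeasure hvw.ne hqv hqw (phat_pos hδ F hvw).ne' (phat_pos hδ F hvw.symm).ne'

lemma Ifun_edgeMeasure_le (hδ : 0 < δ) {Es : Fin G.edgeFinset.card → Finset (Sym2 V)}
    (hEs : Es ∈ seqE G v₁) (hmem : ∀ k, s(v, w) ∈ Es k) (k : Fin G.edgeFinset.card) :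
    Ifun G v₁ δ (edgeMeasure v w) ≤ edgeRate G δ (Es k) v w := by
  have hvw : G.Adj v w := by simpa using hEs.1 k (hmem k)
  choose qs hqs hqv hqw using fun l ↦ exists_mem_TE_eq_single hvw.ne (hmem l)
  refine sInf_le ⟨fun _ ↦ edgeMeasure v w, Pi.single k 1, Es, qs, hEs,
    fun l ↦ by simp only [Pi.single_apply]; positivity, by simp,
    fun l x ↦ memVerts_of_edgeMeasure_ne_zero (hmem l), fun x ↦ by simp [← Finset.sum_mul], hqs,
    fun l ↦ invariant_edgeMeasure (hqv l) (hqw l), ?_⟩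
  rw [Fintype.sum_eq_single k fun l hl ↦ by simp [hl],
    relEntInt_edgeMeasure_phat hδ hvw (hqv k) (hqw k)]
  simp

lemma relEntInt_phat_eq_edgeRate (hδ : 0 < δ) (hF : F ⊆ G.edgeFinset) (hq : q ∈ TE F)
    {ν : ProbMeas V} (hν : ∀ x, ν.1 x ≠ 0 → memVerts F x) (hinv : Invariant ν.1 q)
    (hvw : G.Adj v w) (hsupp : ∀ x, x ≠ v → x ≠ w → ν.1 x = 0) :
    s(v, w) ∈ F ∧ relEntInt ν.1 q (phat G δ F) = edgeRate G δ F v w := by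
  have hloop : ∀ x, s(x, x) ∉ F := fun x hx ↦ by simpa using hF hx
  obtain rfl := eq_edgeMeasure_of_invariant hloop hq hν hinv hvw.ne hsupp
  have hv : memVerts F v := hν v (by simp [edgeMeasure_left hvw.ne])
  have hw : memVerts F w := hν w (by simp [edgeMeasure_right hvw.ne])
  have hqv := eq_single_of_invariant_edgeMeasure hloop hq hv hinv hvw.ne
  have hqw := eq_single_of_invariant_edgeMeasure hloop hq hw
    (edgeMeasure_comm v w ▸ hinv) hvw.ne'
  exact ⟨hq.2.2 v w (by simp [hqv]), relEntInt_edgeMeasure_phat hδ hvw hqv hqw⟩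

lemma edgeRate_le_Ifun (hδ : 1 ≤ δ) (hvw : G.Adj v w) :
    edgeRate G δ {s(v, w)} v w ≤ Ifun G v₁ δ (edgeMeasure v w) := by
  refine le_sInf ?_
  rintro c ⟨νs, r, Es, qs, hE, hr, hr_sum, hν, hmix, hq, hinv, rfl⟩
  refine coe_le_sum_coe_mul hr hr_sum fun k hk ↦ ?_
  have hsupp : ∀ x, x ≠ v → x ≠ w → (νs k).1 x = 0 := fun x hxv hxw ↦ by
    have hx := hmix x
    rw [edgeMeasure_apply_eq_zero hxv hxw, Finset.sum_eq_zero_iff_of_nonneg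
      fun j _ ↦ mul_nonneg (hr j) ((νs j).2.1 x)] at hx
    exact (mul_eq_zero.1 (hx k (Finset.mem_univ k))).resolve_left hk
  obtain ⟨hmem, hcost⟩ := relEntInt_phat_eq_edgeRate (one_pos.trans_le hδ) (hE.1 k) (hq k) (hν k)
    (hinv k) hvw hsupp
  rw [hcost, EReal.coe_le_coe_iff]
  exact edgeRate_mono_edges hδ (by simpa using hmem) hvw (Finset.mem_singleton_self _)

lemma exists_Ifun_lt {δ₁ δ₂ : ℝ} (hE : (seqE G v₁).Nonempty) (hcard : 2 ≤ G.edgeFinset.card)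
    (h1 : 1 ≤ δ₁) (h12 : δ₁ < δ₂) : ∃ μ : ProbMeas V, Ifun G v₁ δ₂ μ < Ifun G v₁ δ₁ μ := by
  obtain ⟨Es, hEs⟩ := hE
  obtain ⟨w, hE₀, x, hx, z, hxz, hz⟩ := exists_first_edge_of_mem_seqE hEs hcard
  have hmem : ∀ k, s(v₁, w) ∈ Es k := fun k ↦ by
    have hle : (⟨0, by omega⟩ : Fin G.edgeFinset.card) ≤ k := Nat.zero_le k
    exact monotone_of_mem_seqE hEs hle (by simp [hE₀])
  have hvw : G.Adj v₁ w := by simpa using hEs.1 _ (hmem ⟨0, by omega⟩)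
  have hδ₁ : 0 < δ₁ := one_pos.trans_le h1
  refine ⟨edgeMeasure v₁ w, ?_⟩
  calc Ifun G v₁ δ₂ (edgeMeasure v₁ w)
      ≤ edgeRate G δ₂ {s(v₁, w)} v₁ w :=
        hE₀ ▸ Ifun_edgeMeasure_le (hδ₁.trans h12) hEs hmem ⟨0, by omega⟩
    _ < edgeRate G δ₁ {s(v₁, w)} v₁ w := EReal.coe_lt_coe_iff.2
        (edgeRate_strictAnti_param hδ₁ h12 hvw (Finset.mem_singleton_self _) hx hxz hz)
    _ ≤ Ifun G v₁ δ₁ (edgeMeasure v₁ w) := edgeRate_le_Ifun h1 hvw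

end RateFunction

/-- When `G` has an edge, nonemptiness of `ℰ` says that all its edges lie in the connected component
of `v₁`. -/
theorem orrw_rate_antitone_general {V : Type} [Fintype V] [DecidableEq V]
    (G : SimpleGraph V) [DecidableRel G.Adj] (v₁ : V) (hE : (seqE G v₁).Nonempty)
    (hcard : 2 ≤ G.edgeFinset.card) (δ₁ δ₂ : ℝ) (h1 : 0 < δ₁) (h12 : δ₁ < δ₂) (h2 : 1 < δ₂) :
    (∀ μ : ProbMeas V, Ifun G v₁ δ₂ μ ≤ Ifun G v₁ δ₁ μ) ∧
    (∃ μ₀ : ProbMeas V, Ifun G v₁ δ₂ μ₀ < Ifun G v₁ δ₁ μ₀) := by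
  refine ⟨fun μ ↦ Ifun_antitoneOn G v₁ μ h1 (h1.trans h12) h12.le, ?_⟩
  obtain ⟨μ₀, hμ₀⟩ := exists_Ifun_lt hE hcard (le_max_right δ₁ 1) (max_lt h12 h2)
  exact ⟨μ₀, hμ₀.trans_le
    (Ifun_antitoneOn G v₁ μ₀ h1 (lt_max_of_lt_left h1) (le_max_left δ₁ 1))⟩

/-- For `1 ≤ δ₁ < δ₂`: `I_{δ₁} ≥ I_{δ₂}` pointwise and strictly at
some `μ₀`. -/
theorem orrw_rate_antitone {V : Type} [Fintype V] [DecidableEq V]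
    (G : SimpleGraph V) [DecidableRel G.Adj] (hG : G.Connected)
    (hV : 3 ≤ Fintype.card V) (v₁ : V) (δ₁ δ₂ : ℝ) (h1 : 1 ≤ δ₁) (h12 : δ₁ < δ₂) :
    (∀ μ : ProbMeas V, Ifun G v₁ δ₂ μ ≤ Ifun G v₁ δ₁ μ) ∧
    (∃ μ₀ : ProbMeas V, Ifun G v₁ δ₂ μ₀ < Ifun G v₁ δ₁ μ₀) := by
  have : Nontrivial V := Fintype.one_lt_card_iff_nontrivial.1 (by omega)
  exact orrw_rate_antitone_general G v₁ (seqE_nonempty hG v₁) (two_le_card_edgeFinset hG hV)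
    δ₁ δ₂ (by linarith) h12 (by linarith)

end ORRW
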